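/- arXiv:1603.04320 — 2 statements merged into one kernel-verified Lean document; each statement's English description precedes it below -/
import Mathlib

section
/- Let n ≤ 4 and let F be a homogeneous cubic polynomial in the variables X₁, …, X_n over ℂ. If for every v ∈ ℂ^n the quadric ∂_v F = Σᵢ vᵢ ∂F/∂Xᵢ is a degenerate quadratic form, then F is a cone, i.e. there exists a nonzero v ∈ ℂ^n with ∂_v F = 0 as a polynomial. -/
open MvPolynomial

/-- Symmetric trilinear forms. -/
structure Tri (V : Type*) [AddCommGroup V] [Module ℂ V] (T : V → V → V → ℂ) : Prop where
  add : ∀ x y z w, T (x + y) z w = T x z w + T y z w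
  smul : ∀ (c : ℂ) x z w, T (c • x) z w = c * T x z w
  sw12 : ∀ x y z, T x y z = T y x z
  sw23 : ∀ x y z, T x y z = T x z y

namespace Tri

variable {V : Type*} [AddCommGroup V] [Module ℂ V] {T : V → V → V → ℂ}

lemma add2 (h : Tri V T) (x y z w : V) : T z (x + y) w = T z x w + T z y w := by
  rw [h.sw12, h.add, h.sw12 x, h.sw12 y]
lemma add3 (h : Tri V T) (x y z w : V) : T z w (x + y) = T z w x + T z w y := by
  rw [h.sw23, h.add2, h.sw23 z x, h.sw23 z y]
lemma smul2 (h : Tri V T) (c : ℂ) (x z w : V) : T z (c • x) w = c * T z x w := by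
  rw [h.sw12, h.smul, h.sw12 x]
lemma smul3 (h : Tri V T) (c : ℂ) (x z w : V) : T z w (c • x) = c * T z w x := by
  rw [h.sw23, h.smul2, h.sw23 z x]
lemma zero1 (h : Tri V T) (z w : V) : T 0 z w = 0 := by
  have := h.smul 0 0 z w
  simpa using this
lemma zero2 (h : Tri V T) (z w : V) : T z 0 w = 0 := by rw [h.sw12, h.zero1]
lemma zero3 (h : Tri V T) (z w : V) : T z w 0 = 0 := by rw [h.sw23, h.zero2]

/-- The linear functional in the last slot. -/
def lin (h : Tri V T) (x y : V) : V →ₗ[ℂ] ℂ where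
  toFun := T x y
  map_add' := fun a b => h.add3 a b x y
  map_smul' := fun c a => h.smul3 c a x y

/-- Polarization of a quadratic form on a subset closed under addition. -/
lemma polar (h : Tri V T) (u x y : V) (hx : T u x x = 0) (hy : T u y y = 0)
    (hxy : T u (x + y) (x + y) = 0) : T u x y = 0 := by
  rw [h.add2, h.add3, h.add3, h.sw23 u y x, hx, hy] at hxy
  linear_combination hxy / 2

lemma exists_cube (h : Tri V T) (x y z : V) (hxyz : T x y z ≠ 0) : ∃ v, T v v v ≠ 0 := by
  by_contra! hc
  have key : ∀ x y, T x x y = 0 := by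
    intro x y
    have h1 := hc (x + y)
    have h2 := hc (x + (-1 : ℂ) • y)
    have h3 := hc x
    have h4 := hc y
    simp only [h.add, h.add2, h.add3, h.smul, h.smul2, h.smul3] at h1 h2
    rw [h.sw12 y x x, h.sw23 x y x, h.sw12 y x y, h.sw23 y y x, h.sw12 y x y] at h1 h2
    linear_combination (h1 - h2 - 2 * h4) / 6
  apply hxyz
  have h1 : ∀ u, T u x x = 0 := fun u => by rw [h.sw12, h.sw23]; exact key x u
  have h2 : ∀ u x, T u x x = 0 := fun u x => by rw [h.sw12, h.sw23]; exact key x u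
  exact h.polar x y z (h2 _ _) (h2 _ _) (h2 _ _)

end Tri

lemma cont_zero (P : ℂ → ℂ) (hP : Continuous P) (h : ∀ t, t * P t = 0) : P 0 = 0 := by
  have h1 : ∀ t ∈ ({0}ᶜ : Set ℂ), P t = 0 := fun t ht => by
    rcases mul_eq_zero.1 (h t) with h | h
    · exact absurd h ht
    · exact h
  have hd : Dense ({0}ᶜ : Set ℂ) := dense_compl_singleton 0
  have := Continuous.ext_on hd hP continuous_const (g := fun _ => (0:ℂ)) h1
  exact congrFun this 0

namespace Tri
variable {V : Type*} [AddCommGroup V] [Module ℂ V] {T : V → V → V → ℂ}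

/-- Three by three Gram determinant of `T x` on `a, b, c`. -/
def G3 (T : V → V → V → ℂ) (x a b c : V) : ℂ :=
  T x a a * (T x b b * T x c c - T x b c ^ 2) - T x a b * (T x a b * T x c c - T x b c * T x a c)
    + T x a c * (T x a b * T x b c - T x b b * T x a c)

lemma det_zero (h : Tri V T) (hdeg : ∀ x, ∃ w, w ≠ 0 ∧ ∀ z, T x w z = 0)
    (e : Module.Basis (Fin 4) ℂ V) (x : V) :
    (Matrix.of fun i j => T x (e i) (e j)).det = 0 := by
  obtain ⟨w, hw, hz⟩ := hdeg x
  rw [← Matrix.exists_mulVec_eq_zero_iff]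
  refine ⟨e.repr w, ?_, ?_⟩
  · intro h0
    apply hw
    apply e.repr.map_eq_zero_iff.1
    ext i
    exact congrFun h0 i
  · ext i
    have h1 : T x (e i) w = 0 := by rw [h.sw23]; exact hz _
    have h2 : h.lin x (e i) w = 0 := h1
    rw [← e.sum_repr w, map_sum] at h2
    simp only [Matrix.mulVec, dotProduct, Matrix.of_apply, Pi.zero_apply]
    rw [← h2]
    refine Finset.sum_congr rfl fun j _ => ?_
    rw [map_smul, smul_eq_mul, mul_comm]
    rfl

/-- Generic rank three. -/
lemma caseA (h : Tri V T) (hV : Module.finrank ℂ V = 4)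
    (hdeg : ∀ x, ∃ w, w ≠ 0 ∧ ∀ z, T x w z = 0)
    (v a b : V) (hv : T v v v ≠ 0) (ha : T v v a = 0) (hb : T v v b = 0)
    (hD : T v a a * T v b b - T v a b ^ 2 ≠ 0) :
    ∃ k, k ≠ 0 ∧ ∀ y z, T k y z = 0 := by
  obtain ⟨k, hk, hvk⟩ := hdeg v
  refine ⟨k, hk, ?_⟩
  have hvk2 : ∀ x, T v x k = 0 := fun x => by rw [h.sw23]; exact hvk x
  have hvk3 : ∀ x, T x v k = 0 := fun x => by rw [h.sw12]; exact hvk2 x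
  have hli : LinearIndependent ℂ ![v, a, b, k] := by
    rw [Fintype.linearIndependent_iff]
    intro g hg
    simp only [Fin.sum_univ_four, Matrix.cons_val] at hg
    have e0 : T v v (g 0 • v + g 1 • a + g 2 • b + g 3 • k) = 0 := by rw [hg, h.zero3]
    have e1 : T v a (g 0 • v + g 1 • a + g 2 • b + g 3 • k) = 0 := by rw [hg, h.zero3]
    have e2 : T v b (g 0 • v + g 1 • a + g 2 • b + g 3 • k) = 0 := by rw [hg, h.zero3]
    simp only [h.add3, h.smul3, hvk2, h.sw23 v a v, h.sw23 v b v, h.sw23 v b a, ha, hb] at e0 e1 e2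
    have g0 : g 0 = 0 := by
      have : g 0 * T v v v = 0 := by linear_combination e0
      exact (mul_eq_zero.1 this).resolve_right hv
    have g1 : g 1 = 0 := by
      have : g 1 * (T v a a * T v b b - T v a b ^ 2) = 0 := by
        linear_combination T v b b * e1 - T v a b * e2
      exact (mul_eq_zero.1 this).resolve_right hD
    have g2 : g 2 = 0 := by
      have : g 2 * (T v a a * T v b b - T v a b ^ 2) = 0 := by
        linear_combination T v a a * e2 - T v a b * e1
      exact (mul_eq_zero.1 this).resolve_right hD
    have g3 : g 3 = 0 := by
      rw [g0, g1, g2] at hg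
      simpa [hk] using hg
    intro i
    fin_cases i <;> assumption
  let e := basisOfLinearIndependentOfCardEqFinrank hli (by simp [hV])
  have e0 : e 0 = v := by simp [e]
  have e1 : e 1 = a := by simp [e]
  have e2 : e 2 = b := by simp [e]
  have e3 : e 3 = k := by simp [e]
  have hdet : ∀ x, T x k k * (T x v v * (T x a a * T x b b - T x a b ^ 2)
      - T x v a * (T x v a * T x b b - T x v b * T x a b)
      + T x v b * (T x v a * T x a b - T x v b * T x a a))
      - (T x v v * (T x a k ^ 2 * T x b b - 2 * T x a k * T x b k * T x a b
        + T x b k ^ 2 * T x a a) - (T x v a * T x b k - T x v b * T x a k) ^ 2) = 0 := by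
    intro x
    rw [← h.det_zero hdeg e x]
    simp [Matrix.det_succ_row_zero, Fin.sum_univ_succ, Fin.succAbove]
    have e2' : e (Fin.succ 1) = b := e2
    have e3' : e (Fin.succ (Fin.succ 1)) = k := e3
    try simp only [e0, e1, e2, e3, e2', e3', hvk3]
    rw [h.sw23 x k v, h.sw23 x k a, h.sw23 x k b, h.sw23 x a v, h.sw23 x b v, h.sw23 x b a, hvk3]
    ring
  -- first order
  have hkk : ∀ u, T u k k = 0 := by
    intro u
    have := cont_zero (fun t => T u k k * ((T v v v + t * T u v v) * ((T v a a + t * T u a a)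
      * (T v b b + t * T u b b) - (T v a b + t * T u a b) ^ 2)
      - t * T u v a * (t * T u v a * (T v b b + t * T u b b) - t * T u v b * (T v a b + t * T u a b))
      + t * T u v b * (t * T u v a * (T v a b + t * T u a b)
        - t * T u v b * (T v a a + t * T u a a)))
      - t * ((T v v v + t * T u v v) * (T u a k ^ 2 * (T v b b + t * T u b b)
        - 2 * T u a k * T u b k * (T v a b + t * T u a b)
        + T u b k ^ 2 * (T v a a + t * T u a a))
        - (t * T u v a * T u b k - t * T u v b * T u a k) ^ 2))
      (by fun_prop) (by
        intro t
        have := hdet (v + t • u)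
        simp only [h.add, h.smul, hvk2, ha, hb] at this
        linear_combination this)
    simp only [zero_mul, mul_zero, add_zero, sub_zero] at this
    simpa [hv, hD] using this
  have hkk2 : ∀ u, T k k u = 0 := fun u => by rw [h.sw23, h.sw12, hkk]
  have hS : ∀ x, T x v v = 0 → T x v a * T x b k - T x v b * T x a k = 0 := by
    intro x hx
    have := hdet x
    rw [hkk, hx] at this
    have h2 : (T x v a * T x b k - T x v b * T x a k) ^ 2 = 0 := by linear_combination this
    exact pow_eq_zero_iff (two_ne_zero) |>.1 h2
  have hS2 : ∀ x, T x v v = 0 → T x a k ^ 2 * T v b b - 2 * T x a k * T x b k * T v a b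
        + T x b k ^ 2 * T v a a = 0 := by
    intro x hx
    have hSx := hS x hx
    have := cont_zero (fun t => T v v v * (T x a k ^ 2 * (T v b b + t * T x b b)
        - 2 * T x a k * T x b k * (T v a b + t * T x a b)
        + T x b k ^ 2 * (T v a a + t * T x a a))) (by fun_prop) (by
        intro t
        have := hdet (v + t • x)
        simp only [h.add, h.smul, hvk2, ha, hb, hkk, hx] at this
        have h3 : t * (t * (T v v v * (T x a k ^ 2 * (T v b b + t * T x b b)
          - 2 * T x a k * T x b k * (T v a b + t * T x a b)
          + T x b k ^ 2 * (T v a a + t * T x a a)))) = 0 := by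
            linear_combination (-1) * this + t ^ 4 * (T x v a * T x b k - T x v b * T x a k) * hSx
        rcases mul_eq_zero.1 h3 with h4 | h4
        · rw [h4, zero_mul]
        · exact h4)
    simp only [zero_mul, mul_zero, add_zero, sub_zero] at this
    exact (mul_eq_zero.1 this).resolve_left hv
  have hav : T a v v = 0 := by rw [h.sw12, h.sw23, ha]
  have hbv : T b v v = 0 := by rw [h.sw12, h.sw23, hb]
  have habv : T (a + b) v v = 0 := by rw [h.add, hav, hbv, add_zero]
  have s1 := hS a hav
  have s2 := hS b hbv
  have s3 := hS _ habv
  have q1 := hS2 a hav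
  have q2 := hS2 b hbv
  have q3 := hS2 _ habv
  simp only [h.add] at s3 q3
  rw [h.sw12 a v a] at s1 s3
  rw [h.sw12 a v b] at s1 s3
  rw [h.sw12 b v a, h.sw12 b v b, h.sw23 v b a, h.sw12 b a k] at s2 s3
  rw [h.sw12 b a k] at q2 q3
  have hα : T a a k = 0 := by
    by_contra hα
    have : T a a k ^ 2 * T v a a * (T v a a * T v b b - T v a b ^ 2) = 0 := by
      linear_combination T v a a ^ 2 * q1 + (2 * T a a k * T v a a * T v a b
        - T v a a * (T v a a * T a b k + T v a b * T a a k)) * s1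
    have hp : T v a a = 0 := by simpa [hα, hD] using this
    have hq : T v a b = 0 := by
      rw [hp] at s1
      simpa [hα] using s1
    exact hD (by rw [hp, hq]; ring)
  have hγ : T b b k = 0 := by
    by_contra hγ
    have : T b b k ^ 2 * T v b b * (T v a a * T v b b - T v a b ^ 2) = 0 := by
      linear_combination T v b b ^ 2 * q2 - (2 * T b b k * T v b b * T v a b
        - T v b b * (T v b b * T a b k + T v a b * T b b k)) * s2
    have hp : T v b b = 0 := by simpa [hγ, hD] using this
    have hq : T v a b = 0 := by
      rw [hp] at s2
      simpa [hγ] using s2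
    exact hD (by rw [hp, hq]; ring)
  have hβ : T a b k = 0 := by
    by_contra hβ
    rw [hα] at s1
    rw [hγ] at s2
    rw [hα, hγ] at q3
    have hp : T v a a = 0 := by simpa [hβ] using s1
    have hs : T v b b = 0 := by simpa [hβ] using s2
    rw [hp, hs] at q3
    have hq : T v a b = 0 := by simpa [hβ] using q3
    exact hD (by rw [hp, hq]; ring)
  intro y z
  have hT : ∀ y z, T y z k = 0 := by
    have hbas : ∀ i j, T (e i) (e j) k = 0 := by
      intro i j
      fin_cases i <;> fin_cases j <;>
        simp [e0, e1, e2, e3, hvk2, hvk3, hkk, hkk2, hα, hβ, hγ, h.sw12 b a, h.sw23 k, h.sw12 k]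
    have h1 : ∀ i z, T (e i) z k = 0 := by
      intro i z
      have : h.lin (e i) k = 0 := by
        apply e.ext
        intro j
        show T (e i) k (e j) = 0
        rw [h.sw23]; exact hbas i j
      rw [h.sw23]
      exact LinearMap.congr_fun this z
    intro y z
    have : h.lin z k = 0 := by
      apply e.ext
      intro j
      show T z k (e j) = 0
      rw [h.sw23, h.sw12]; exact h1 j z
    rw [h.sw12, h.sw23]
    exact LinearMap.congr_fun this y
  rw [h.sw12, h.sw23]
  exact hT y z

lemma exists_ker (hV : Module.finrank ℂ V = 4) (f g l : V →ₗ[ℂ] ℂ) :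
    ∃ k, k ≠ 0 ∧ f k = 0 ∧ g k = 0 ∧ l k = 0 := by
  haveI : FiniteDimensional ℂ V := Module.finite_of_finrank_pos (by omega)
  have := LinearMap.ker_ne_bot_of_finrank_lt (f := f.prod (g.prod l)) (by simp [hV])
  obtain ⟨k, hk, hk0⟩ := (Submodule.ne_bot_iff _).1 this
  refine ⟨k, hk0, ?_⟩
  simpa using hk

/-- All `T v` (with `T v v v ≠ 0`) have rank at most one on `v, a`. -/
lemma caseC (h : Tri V T) (hV : Module.finrank ℂ V = 4)
    (v : V) (hv : T v v v ≠ 0)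
    (hC : ∀ v a, T v v v * (T v v v * T v a a - T v v a ^ 2) = 0) :
    ∃ k, k ≠ 0 ∧ ∀ y z, T k y z = 0 := by
  obtain ⟨k, hk, hvk, -, -⟩ := exists_ker hV (h.lin v v) (h.lin v v) (h.lin v v)
  replace hvk : T v v k = 0 := hvk
  refine ⟨k, hk, ?_⟩
  have hW : ∀ a, T v v a = 0 → T v a a = 0 := by
    intro a ha
    have := hC v a
    rw [ha] at this
    simpa [hv] using this
  have hW2 : ∀ a b, T v v a = 0 → T v v b = 0 → T v a b = 0 := fun a b ha hb =>
    h.polar _ _ _ (hW a ha) (hW b hb) (hW _ (by rw [h.add3, ha, hb, add_zero]))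
  have dec : ∀ x, ∃ c : ℂ, ∃ w, T v v w = 0 ∧ x = c • v + w := by
    intro x
    refine ⟨T v v x / T v v v, x + (-(T v v x / T v v v)) • v, ?_, ?_⟩
    · rw [h.add3, h.smul3]; field_simp; ring
    · rw [neg_smul]; abel
  have hvk0 : ∀ w, T v v w = 0 → ∀ x, T v w x = 0 := by
    intro w hw x
    obtain ⟨c, x', hx', rfl⟩ := dec x
    rw [h.add3, h.smul3, h.sw23 v w v, hw, hW2 _ _ hw hx']
    ring
  have hu : ∀ u w, T v v w = 0 → T u w w = 0 := by
    intro u w hw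
    have hvw := hvk0 w hw
    have hvw1 : T v u w = 0 := by rw [h.sw23]; exact hvw u
    have hvw2 : T u v w = 0 := by rw [h.sw12]; exact hvw1
    have := cont_zero (fun t => (T v v v + t * T v v u + t * T v u v + t * T u v v
      + t ^ 2 * T u u v + t ^ 2 * T u v u + t ^ 2 * T v u u + t ^ 3 * T u u u)
      * ((T v v v + t * T v v u + t * T v u v + t * T u v v
      + t ^ 2 * T u u v + t ^ 2 * T u v u + t ^ 2 * T v u u + t ^ 3 * T u u u) * T u w w
        - t ^ 3 * T u u w ^ 2)) (by fun_prop) (by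
        intro t
        have := hC (v + t • u) w
        simp only [h.add, h.smul, h.add2, h.add3, h.smul2, h.smul3, hw, hvw, hvw1, hvw2] at this
        linear_combination this)
    simpa [hv] using this
  have hu2 : ∀ u w w', T v v w = 0 → T v v w' = 0 → T u w w' = 0 := fun u a b ha hb =>
    h.polar _ _ _ (hu u a ha) (hu u b hb) (hu u _ (by rw [h.add3, ha, hb, add_zero]))
  intro y z
  obtain ⟨c, y', hy, rfl⟩ := dec y
  rw [h.add2, h.smul2, h.sw12 k v, hvk0 k hvk, h.sw12 k y', h.sw23 y', h.sw12 y' z,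
    hu2 z y' k hy hvk]
  ring

/-- All `T v` (with `T v v v ≠ 0`) have rank at most two. -/
lemma caseB (h : Tri V T) (hV : Module.finrank ℂ V = 4)
    (v a : V) (hv : T v v v ≠ 0) (hva : T v v a = 0) (haa : T v a a ≠ 0)
    (hB : ∀ v a b, T v v v * G3 T v v a b = 0) :
    ∃ k, k ≠ 0 ∧ ∀ y z, T k y z = 0 := by
  obtain ⟨k, hk, hvk, hak, hkaa⟩ := exists_ker hV (h.lin v v) (h.lin v a) (h.lin a a)
  replace hvk : T v v k = 0 := hvk
  replace hak : T v a k = 0 := hak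
  replace hkaa : T a a k = 0 := hkaa
  refine ⟨k, hk, ?_⟩
  have hW : ∀ w, T v v w = 0 → T v a w = 0 → T v w w = 0 := by
    intro w hw hw'
    have := hB v a w
    rw [G3, hw, hw', hva] at this
    simpa [hv, haa] using this
  have hW2 : ∀ b c, T v v b = 0 → T v a b = 0 → T v v c = 0 → T v a c = 0 → T v b c = 0 :=
    fun b c hb hb' hc hc' =>
    h.polar _ _ _ (hW b hb hb') (hW c hc hc') (hW _ (by rw [h.add3, hb, hc, add_zero])
      (by rw [h.add3, hb', hc', add_zero]))
  have dec : ∀ x, ∃ c d : ℂ, ∃ w, T v v w = 0 ∧ T v a w = 0 ∧ x = c • v + d • a + w := by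
    intro x
    refine ⟨T v v x / T v v v, T v a x / T v a a,
      x + (-(T v v x / T v v v)) • v + (-(T v a x / T v a a)) • a, ?_, ?_, ?_⟩
    · rw [h.add3, h.smul3, h.add3, h.smul3, hva]; field_simp; ring
    · rw [h.add3, h.smul3, h.add3, h.smul3, h.sw23 v a v, hva]; field_simp; ring
    · rw [neg_smul, neg_smul]; abel
  have hvk0 : ∀ w, T v v w = 0 → T v a w = 0 → ∀ x, T v w x = 0 := by
    intro w hw hw' x
    obtain ⟨c, d, x', hx', hx'', rfl⟩ := dec x
    rw [h.add3, h.add3, h.smul3, h.smul3, h.sw23 v w v, h.sw23 v w a, hw, hw',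
      hW2 _ _ hw hw' hx' hx'']
    ring
  have hu : ∀ u w, T v v w = 0 → T v a w = 0 → T u w w = 0 := by
    intro u w hw hw'
    have hvw := hvk0 w hw hw'
    have hvw1 : T v u w = 0 := by rw [h.sw23]; exact hvw u
    have hvw2 : T u v w = 0 := by rw [h.sw12]; exact hvw1
    obtain ⟨τ, hτ⟩ : ∃ τ : ℂ → ℂ, τ = fun t => T v v v + t * T v v u + t * T v u v + t * T u v v
      + t ^ 2 * T u u v + t ^ 2 * T u v u + t ^ 2 * T v u u + t ^ 3 * T u u u := ⟨_, rfl⟩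
    have hτc : Continuous τ := by rw [hτ]; fun_prop
    have hτ0 : τ 0 = T v v v := by rw [hτ]; simp
    obtain ⟨M, hM⟩ : ∃ M : ℂ → ℂ, M = fun t => t * (T v u a + T u v a) + t ^ 2 * T u u a :=
      ⟨_, rfl⟩
    have hMc : Continuous M := by rw [hM]; fun_prop
    have hM0 : M 0 = 0 := by rw [hM]; simp
    have := cont_zero (fun t => τ t * (τ t * ((T v a a + t * T u a a) * T u w w - t * T u a w ^ 2)
      - M t * (M t * T u w w - T u a w * (t ^ 2 * T u u w))
      + t * T u u w * (M t * (t * T u a w) - (T v a a + t * T u a a) * (t ^ 2 * T u u w))))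
      (by fun_prop) (by
        intro t
        have := hB (v + t • u) a w
        have e1 : T (v + t • u) (v + t • u) (v + t • u) = τ t := by
          rw [hτ]
          simp only [h.add, h.smul, h.add2, h.add3, h.smul2, h.smul3]
          ring
        have e2 : T (v + t • u) (v + t • u) a = M t := by
          rw [hM]
          simp only [h.add, h.smul, h.add2, h.smul2, hva]
          ring
        rw [G3, e1, e2] at this
        simp only [h.add, h.smul, h.add2, h.smul2, hw, hw', hvw, hvw1, hvw2] at this
        linear_combination this)
    simpa [hv, hτ0, hM0, haa] using this
  have hu2 : ∀ u b c, T v v b = 0 → T v a b = 0 → T v v c = 0 → T v a c = 0 → T u b c = 0 :=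
    fun u b c hb hb' hc hc' =>
    h.polar _ _ _ (hu u b hb hb') (hu u c hc hc') (hu u _ (by rw [h.add3, hb, hc, add_zero])
      (by rw [h.add3, hb', hc', add_zero]))
  have hku : ∀ w, T v v w = 0 → T v a w = 0 → ∀ z, T k w z = 0 := by
    intro w hw hw' z
    rw [h.sw12 k w, h.sw23 w, h.sw12 w z, hu2 z w k hw hw' hvk hak]
  have hkv : ∀ z, T k v z = 0 := fun z => by rw [h.sw12, hvk0 k hvk hak]
  intro y z
  obtain ⟨c, d, y', hy, hy', rfl⟩ := dec y
  obtain ⟨c', d', z', hz, hz', rfl⟩ := dec z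
  rw [h.add2, h.add2, h.smul2, h.smul2, hku y' hy hy', hkv, h.add3, h.add3, h.smul3, h.smul3,
    h.sw23 k a v, hkv, h.sw23 k a z', hku z' hz hz', h.sw12 k a a, h.sw23 a k a, hkaa]
  ring

lemma main4 (h : Tri V T) (hV : Module.finrank ℂ V = 4)
    (hdeg : ∀ x, ∃ w, w ≠ 0 ∧ ∀ z, T x w z = 0) :
    ∃ k, k ≠ 0 ∧ ∀ y z, T k y z = 0 := by
  by_cases h0 : ∀ x y z, T x y z = 0
  · obtain ⟨w, hw, -⟩ := hdeg 0
    exact ⟨w, hw, fun y z => h0 w y z⟩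
  push Not at h0
  obtain ⟨x, y, z, hxyz⟩ := h0
  obtain ⟨v0, hv0⟩ := h.exists_cube x y z hxyz
  by_cases hA : ∀ v a b, T v v v * G3 T v v a b = 0
  · by_cases hC : ∀ v a, T v v v * (T v v v * T v a a - T v v a ^ 2) = 0
    · exact h.caseC hV v0 hv0 hC
    · push Not at hC
      obtain ⟨v, a, hva⟩ := hC
      have hv := left_ne_zero_of_mul hva
      have hD := right_ne_zero_of_mul hva
      refine h.caseB hV v (T v v v • a + (-T v v a) • v) hv ?_ ?_ hA
      · rw [h.add3, h.smul3, h.smul3]; ring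
      · have : T v (T v v v • a + (-T v v a) • v) (T v v v • a + (-T v v a) • v)
            = T v v v * (T v v v * T v a a - T v v a ^ 2) := by
          simp only [h.add2, h.add3, h.smul2, h.smul3, h.sw23 v a v]
          ring
        rw [this]
        exact hva
  · push Not at hA
    obtain ⟨v, a, b, hvab⟩ := hA
    have hv := left_ne_zero_of_mul hvab
    refine h.caseA hV hdeg v (T v v v • a + (-T v v a) • v) (T v v v • b + (-T v v b) • v) hv
      ?_ ?_ ?_
    · rw [h.add3, h.smul3, h.smul3]; ring
    · rw [h.add3, h.smul3, h.smul3]; ring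
    · have : T v (T v v v • a + (-T v v a) • v) (T v v v • a + (-T v v a) • v)
          * T v (T v v v • b + (-T v v b) • v) (T v v v • b + (-T v v b) • v)
          - T v (T v v v • a + (-T v v a) • v) (T v v v • b + (-T v v b) • v) ^ 2
          = T v v v ^ 2 * (T v v v * G3 T v v a b) := by
        simp only [h.add2, h.add3, h.smul2, h.smul3, h.sw23 v a v, h.sw23 v b v, G3]
        ring
      rw [this]
      exact mul_ne_zero (pow_ne_zero _ hv) hvab

end Tri

lemma tri_main (d : ℕ) : ∀ (V : Type) [AddCommGroup V] [Module ℂ V] (T : V → V → V → ℂ),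
    Tri V T → FiniteDimensional ℂ V → Module.finrank ℂ V + d = 4 →
    (∀ x, ∃ w, w ≠ 0 ∧ ∀ z, T x w z = 0) → ∃ k, k ≠ 0 ∧ ∀ y z, T k y z = 0 := by
  induction d with
  | zero =>
    intro V _ _ T h _ hV hdeg
    exact h.main4 hV hdeg
  | succ d ih =>
    intro V _ _ T h _ hV hdeg
    obtain ⟨k, hk, hT⟩ := ih (V × ℂ) (fun x y z => T x.1 y.1 z.1 + x.2 * y.2 * z.2)
      { add := fun x y z w => by simp only [Prod.fst_add, Prod.snd_add, h.add]; ring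
        smul := fun c x z w => by
          simp only [Prod.smul_fst, Prod.smul_snd, h.smul, smul_eq_mul]; ring
        sw12 := fun x y z => by simp only [h.sw12 x.1]; ring
        sw23 := fun x y z => by simp only [h.sw23 x.1 y.1]; ring }
      inferInstance (by rw [Module.finrank_prod, Module.finrank_self]; omega) (by
        intro x
        obtain ⟨w, hw, hz⟩ := hdeg x.1
        refine ⟨(w, 0), fun h0 => hw (congrArg Prod.fst h0), fun z => ?_⟩
        simp [hz])
    have h2 : k.2 = 0 := by
      have := hT (0, 1) (0, 1)
      simpa [h.zero2] using this
    refine ⟨k.1, fun h1 => hk (Prod.ext h1 h2), fun y z => ?_⟩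
    have := hT (y, 0) (z, 0)
    simpa using this

section bridge

variable {n : ℕ}

/-- Directional derivative. -/
noncomputable def dirD (v : Fin n → ℂ) : MvPolynomial (Fin n) ℂ →ₗ[ℂ] MvPolynomial (Fin n) ℂ :=
  ∑ i, v i • (pderiv i : Derivation ℂ (MvPolynomial (Fin n) ℂ) (MvPolynomial (Fin n) ℂ)).toLinearMap

lemma dirD_apply (v : Fin n → ℂ) (F : MvPolynomial (Fin n) ℂ) :
    dirD v F = ∑ i, v i • pderiv i F := by
  simp [dirD]

lemma dirD_add (v w : Fin n → ℂ) : dirD (v + w) = dirD v + dirD w := by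
  simp [dirD, add_smul, Finset.sum_add_distrib]

lemma dirD_smul (c : ℂ) (v : Fin n → ℂ) : dirD (c • v) = c • dirD v := by
  simp [dirD, mul_smul, Finset.smul_sum]

lemma pderiv_comm' (i j : Fin n) (F : MvPolynomial (Fin n) ℂ) :
    pderiv i (pderiv j F) = pderiv j (pderiv i F) := by
  have : ⁅(pderiv i : Derivation ℂ (MvPolynomial (Fin n) ℂ) (MvPolynomial (Fin n) ℂ)),
      (pderiv j : Derivation ℂ (MvPolynomial (Fin n) ℂ) (MvPolynomial (Fin n) ℂ))⁆ = 0 := by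
    apply MvPolynomial.derivation_ext
    intro k
    simp [Derivation.commutator_apply, pderiv_X, Pi.single_apply, apply_ite]
  have h2 := congrArg (fun D => D F) this
  simpa [Derivation.commutator_apply, sub_eq_zero] using h2

lemma dirD_comm (v w : Fin n → ℂ) (F : MvPolynomial (Fin n) ℂ) :
    dirD v (dirD w F) = dirD w (dirD v F) := by
  simp_rw [dirD_apply, map_sum, Derivation.map_smul, Finset.smul_sum]
  rw [Finset.sum_comm]
  refine Finset.sum_congr rfl fun i _ => Finset.sum_congr rfl fun j _ => ?_
  rw [pderiv_comm', smul_comm]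

lemma dirD_hom (v : Fin n → ℂ) (F : MvPolynomial (Fin n) ℂ) (m : ℕ) (hF : F.IsHomogeneous (m + 1)) :
    (dirD v F).IsHomogeneous m := by
  rw [dirD_apply]
  apply IsHomogeneous.sum
  intro i _
  rw [smul_eq_C_mul]
  simpa using (isHomogeneous_C _ _).mul (hF.pderiv (i := i))

lemma eq_zero_of_dirD (F : MvPolynomial (Fin n) ℂ) (m : ℕ) (hF : F.IsHomogeneous (m + 1))
    (h : ∀ v, dirD v F = 0) : F = 0 := by
  have h1 : ∀ i, pderiv i F = 0 := by
    intro i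
    have := h (Pi.single i 1)
    rw [dirD_apply, Finset.sum_eq_single i] at this
    · simpa using this
    · intro j _ hj
      simp [hj]
    · simp
  have := hF.sum_X_mul_pderiv
  simp only [h1, mul_zero, Finset.sum_const_zero] at this
  rcases smul_eq_zero.1 this.symm with h2 | h2
  · omega
  · exact h2

lemma tri_of (F : MvPolynomial (Fin n) ℂ) :
    Tri (Fin n → ℂ) (fun x y z => constantCoeff (dirD z (dirD y (dirD x F)))) where
  add := fun x y z w => by simp [dirD_add]
  smul := fun c x z w => by simp [dirD_smul]
  sw12 := fun x y z => by simp only [dirD_comm x y]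
  sw23 := fun x y z => by simp only [dirD_comm z y]

end bridge

/-- (Hesse, Gordan–Noether; see Lossen.) A homogeneous cubic polynomial in `n ≤ 4` variables
all of whose directional derivatives (partial derivatives) are degenerate quadratic forms is
a cone. -/
theorem stmt_3 {n : ℕ} (hn : n ≤ 4) (F : MvPolynomial (Fin n) ℂ)
    (hF : F.IsHomogeneous 3)
    (hdeg : ∀ v : Fin n → ℂ, ∃ w : Fin n → ℂ, w ≠ 0 ∧
      ∑ j, w j • pderiv j (∑ i, v i • pderiv i F) = 0) :
    ∃ v : Fin n → ℂ, v ≠ 0 ∧ ∑ i, v i • pderiv i F = 0 := by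
  obtain ⟨k, hk, hT⟩ := tri_main (4 - n) (Fin n → ℂ) _ (tri_of F) inferInstance
    (by simp; omega) (by
      intro x
      obtain ⟨w, hw, h⟩ := hdeg x
      refine ⟨w, hw, fun z => ?_⟩
      rw [← dirD_apply, ← dirD_apply] at h
      simp [h])
  refine ⟨k, hk, ?_⟩
  rw [← dirD_apply]
  have h2 := dirD_hom k F 2 hF
  refine eq_zero_of_dirD _ 1 h2 fun y => ?_
  have h1 := dirD_hom y _ 1 h2
  refine eq_zero_of_dirD _ 0 h1 fun z => ?_
  have h0 := dirD_hom z _ 0 h1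
  rw [← totalDegree_zero_iff_isHomogeneous, totalDegree_eq_zero_iff_eq_C] at h0
  have := hT y z
  rw [constantCoeff_eq] at this
  rw [h0, this, C_0]
end

section
/- Let V ⊆ ℂ^n be an open set and let f, f₁, …, f_{2n} : V → ℂ be holomorphic functions such that at every point b ∈ V the complex differentials df₁(b), …, df_{2n}(b) are linearly independent over ℝ (as real-linear functionals on ℂ^n), and let a = (a₁, …, a_{2n}) : V → ℝ^{2n} be the unique map with real values such that df(b) = Σᵢ aᵢ(b)·dfᵢ(b) for every b ∈ V. Assume the real derivative da_b has constant rank r at every b ∈ V. Then for every c ∈ ℝ^{2n} and every connected component F of a^{-1}(c), there exist linearly independent vectors u⁽¹⁾, …, u⁽ʳ⁾ ∈ ℝ^{2n} such that for each j the holomorphic function Σᵢ u⁽ʲ⁾ᵢ·fᵢ is constant on F. -/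
open Set Metric Filter Topology MeasureTheory

theorem aux_line_hasDerivAt {n : ℕ} {f : (Fin n → ℂ) → ℂ} {x w : Fin n → ℂ} {t : ℂ}
    (hf : DifferentiableAt ℂ f (x + t • w)) :
    HasDerivAt (fun ζ : ℂ => f (x + ζ • w)) (fderiv ℂ f (x + t • w) w) t := by
  have h1 : HasDerivAt (fun ζ : ℂ => x + ζ • w) w t := by
    simpa using ((hasDerivAt_id t).smul_const w).const_add x
  exact hf.hasFDerivAt.comp_hasDerivAt t h1

theorem aux_fderiv_bound {n : ℕ} {f : (Fin n → ℂ) → ℂ} {x : Fin n → ℂ} {R M : ℝ} (hR : 0 < R)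
    (hf : DifferentiableOn ℂ f (ball x R)) (hM : ∀ y ∈ ball x R, ‖f y‖ ≤ M) :
    ‖fderiv ℂ f x‖ ≤ M / (R / 2) := by
  have hM0 : 0 ≤ M := (norm_nonneg _).trans (hM x (mem_ball_self hR))
  refine ContinuousLinearMap.opNorm_le_bound _ (by positivity) fun w => ?_
  rcases eq_or_ne w 0 with rfl | hw
  · simp
  have hw' : 0 < ‖w‖ := norm_pos_iff.2 hw
  have hs : 0 < R / (2 * ‖w‖) := by positivity
  have hmem : ∀ ζ ∈ closedBall (0 : ℂ) (R / (2 * ‖w‖)), x + ζ • w ∈ ball x R := by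
    intro ζ hζ
    simp only [mem_closedBall, dist_zero_right] at hζ
    simp only [mem_ball, dist_self_add_left, norm_smul]
    have : ‖ζ‖ * ‖w‖ ≤ R / (2 * ‖w‖) * ‖w‖ := by gcongr
    have h2 : R / (2 * ‖w‖) * ‖w‖ = R / 2 := by field_simp
    linarith
  have hd : ∀ ζ ∈ closedBall (0 : ℂ) (R / (2 * ‖w‖)),
      HasDerivAt (fun ζ : ℂ => f (x + ζ • w)) (fderiv ℂ f (x + ζ • w) w) ζ := fun ζ hζ =>
    aux_line_hasDerivAt ((hf _ (hmem ζ hζ)).differentiableAt (isOpen_ball.mem_nhds (hmem ζ hζ)))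
  have h0 := hd 0 (by simp [hs.le])
  have := Complex.norm_deriv_le_of_forall_mem_sphere_norm_le (f := fun ζ : ℂ => f (x + ζ • w))
    (c := 0) (C := M) hs ?_ ?_
  · rw [h0.deriv] at this
    simp only [zero_smul, add_zero] at this
    refine this.trans (le_of_eq ?_)
    field_simp
  · apply DifferentiableOn.diffContOnCl
    rw [closure_ball _ hs.ne']
    exact fun ζ hζ => (hd ζ hζ).differentiableAt.differentiableWithinAt
  · exact fun ζ hζ => hM _ (hmem _ (sphere_subset_closedBall hζ))

theorem aux_dir_deriv {n : ℕ} {V : Set (Fin n → ℂ)} (hV : IsOpen V) {f : (Fin n → ℂ) → ℂ}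
    (hf : DifferentiableOn ℂ f V) (v : Fin n → ℂ) :
    DifferentiableOn ℂ (fun z => fderiv ℂ f z v) V := by
  intro z₀ hz₀
  apply DifferentiableAt.differentiableWithinAt
  have hc : ContinuousAt f z₀ := (hf.continuousOn).continuousAt (hV.mem_nhds hz₀)
  have hev : ∀ᶠ z in 𝓝 z₀, z ∈ V ∧ ‖f z‖ ≤ ‖f z₀‖ + 1 :=
    (show ∀ᶠ z in 𝓝 z₀, z ∈ V from hV.mem_nhds hz₀).and ((hc.norm.eventually_lt continuousAt_const (by simp)).mono
      fun _ h => h.le)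
  obtain ⟨R', hR', hball⟩ := Metric.eventually_nhds_iff_ball.1 hev
  obtain ⟨R, hR, rfl⟩ : ∃ R, 0 < R ∧ R' = 3 * R := ⟨R' / 3, by positivity, by ring⟩
  set M := ‖f z₀‖ + 1
  have hdiff : ∀ z ∈ ball z₀ (3 * R), DifferentiableAt ℂ f z := fun z hz =>
    (hf z (hball z hz).1).differentiableAt (hV.mem_nhds (hball z hz).1)
  have hbd : ∀ z ∈ ball z₀ (2 * R), ‖fderiv ℂ f z‖ ≤ M / (R / 2) := by
    intro z hz
    have hsub : ball z R ⊆ ball z₀ (3 * R) := by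
      apply ball_subset_ball'
      rw [mem_ball] at hz
      linarith
    exact aux_fderiv_bound hR (fun y hy => (hdiff y (hsub hy)).differentiableWithinAt)
      fun y hy => (hball y (hsub hy)).2
  set ρ := R / (‖v‖ + 1) with hρdef
  have hρ : 0 < ρ := by positivity
  have hmem : ∀ z ∈ ball z₀ R, ∀ ζ ∈ closedBall (0 : ℂ) ρ, z + ζ • v ∈ ball z₀ (2 * R) := by
    intro z hz ζ hζ
    simp only [mem_closedBall, dist_zero_right] at hζ
    rw [mem_ball] at hz ⊢
    have h1 : ‖ζ • v‖ ≤ R := by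
      rw [norm_smul]
      calc ‖ζ‖ * ‖v‖ ≤ ρ * (‖v‖ + 1) := by gcongr; linarith
        _ = R := by rw [hρdef]; field_simp
    calc dist (z + ζ • v) z₀ ≤ dist (z + ζ • v) z + dist z z₀ := dist_triangle _ _ _
      _ < 2 * R := by rw [dist_self_add_left]; linarith
  have hsub23 : ball z₀ (2 * R) ⊆ ball z₀ (3 * R) := ball_subset_ball (by linarith)
  have hsph : ∀ θ : ℝ, circleMap 0 ρ θ ∈ closedBall (0 : ℂ) ρ := fun θ =>
    sphere_subset_closedBall (circleMap_mem_sphere 0 hρ.le θ)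
  let k : ℝ → ℂ := fun θ => deriv (circleMap 0 ρ) θ * ((circleMap 0 ρ θ) ^ 2)⁻¹
  have hk : Continuous k := by
    have h1 : Continuous (circleMap 0 ρ) := continuous_circleMap 0 ρ
    have : ∀ θ, (circleMap 0 ρ θ) ^ 2 ≠ 0 := fun θ => pow_ne_zero _ (by
      simpa using circleMap_ne_center (c := 0) hρ.ne' (θ := θ))
    simp only [k, deriv_circleMap]
    exact (h1.mul continuous_const).mul ((h1.pow 2).inv₀ this)
  let F : (Fin n → ℂ) → ℝ → ℂ := fun z θ => k θ * f (z + circleMap 0 ρ θ • v)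
  let F' : (Fin n → ℂ) → ℝ → ((Fin n → ℂ) →L[ℂ] ℂ) :=
    fun z θ => k θ • fderiv ℂ f (z + circleMap 0 ρ θ • v)
  have hformula : ∀ z ∈ ball z₀ R, fderiv ℂ f z v =
      (2 * Real.pi * Complex.I : ℂ)⁻¹ • ∫ θ in (0 : ℝ)..2 * Real.pi, F z θ := by
    intro z hz
    let U : Set ℂ := {ζ | z + ζ • v ∈ ball z₀ (3 * R)}
    have hU : IsOpen U := isOpen_ball.preimage (by fun_prop)
    have hd : ∀ ζ ∈ U,
      HasDerivAt (fun ζ : ℂ => f (z + ζ • v)) (fderiv ℂ f (z + ζ • v) v) ζ := fun ζ hζ =>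
      aux_line_hasDerivAt (hdiff _ hζ)
    have hcU : closedBall (0 : ℂ) ρ ⊆ U := fun ζ hζ => hsub23 (hmem z hz ζ hζ)
    have := Complex.two_pi_I_inv_smul_circleIntegral_sub_sq_inv_smul_of_differentiable hU hcU
      (fun ζ hζ => (hd ζ hζ).differentiableAt.differentiableWithinAt) (mem_ball_self hρ)
    rw [(hd 0 (hcU (by simp [hρ.le]))).deriv] at this
    simp only [zero_smul, add_zero] at this
    rw [← this, circleIntegral]
    congr 2
    ext θ
    simp [F, k, mul_assoc]
  have hFc : ∀ z ∈ ball z₀ R, Continuous (F z) := by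
    intro z hz
    refine hk.mul ?_
    rw [continuous_iff_continuousAt]
    intro θ
    have h1 : ContinuousAt f (z + circleMap 0 ρ θ • v) :=
      (hdiff _ (hsub23 (hmem z hz _ (hsph θ)))).continuousAt
    have h2 : Continuous (fun θ : ℝ => z + circleMap 0 ρ θ • v) := by
      have := continuous_circleMap 0 ρ
      fun_prop
    exact ContinuousAt.comp (f := fun θ : ℝ => z + circleMap 0 ρ θ • v) h1 h2.continuousAt
  have key := intervalIntegral.hasFDerivAt_integral_of_dominated_of_fderiv_le
    (𝕜 := ℂ) (μ := volume) (a := 0) (b := 2 * Real.pi) (F := F) (F' := F') (x₀ := z₀)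
    (bound := fun θ => ‖k θ‖ * (M / (R / 2))) (s := ball z₀ R)
    (ball_mem_nhds z₀ hR) ?_ ?_ ?_ ?_ ?_ ?_
  · have h2 : HasFDerivAt (fun z => (2 * Real.pi * Complex.I : ℂ)⁻¹ •
        ∫ θ in (0 : ℝ)..2 * Real.pi, F z θ) ((2 * Real.pi * Complex.I : ℂ)⁻¹ •
        ∫ θ in (0 : ℝ)..2 * Real.pi, F' z₀ θ) z₀ :=
      HasFDerivAt.fun_const_smul key _
    refine (h2.congr_of_eventuallyEq ?_).differentiableAt
    filter_upwards [ball_mem_nhds z₀ hR] with z hz using hformula z hz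
  · filter_upwards [ball_mem_nhds z₀ hR] with z hz
    exact (hFc z hz).aestronglyMeasurable
  · exact (hFc z₀ (mem_ball_self hR)).intervalIntegrable _ _
  · refine AEStronglyMeasurable.smul hk.aestronglyMeasurable ?_
    have h2 : Continuous (fun θ : ℝ => z₀ + circleMap 0 ρ θ • v) := by
      have := continuous_circleMap 0 ρ
      fun_prop
    exact ((measurable_fderiv ℂ f).comp h2.measurable).aestronglyMeasurable
  · refine ae_of_all _ fun θ _ z hz => ?_
    simp only [F', norm_smul]
    gcongr
    exact hbd _ (hmem z hz _ (hsph θ))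
  · exact (hk.norm.mul continuous_const).intervalIntegrable _ _
  · refine ae_of_all _ fun θ _ z hz => ?_
    have h1 := (hdiff _ (hsub23 (hmem z hz _ (hsph θ)))).hasFDerivAt
    have h3 : HasFDerivAt (fun x : Fin n → ℂ => x + circleMap 0 ρ θ • v)
        (ContinuousLinearMap.id ℂ (Fin n → ℂ)) z := (hasFDerivAt_id z).add_const _
    have h2 := (HasFDerivAt.comp z h1 h3).const_mul (k θ)
    simpa [F, F'] using h2

theorem aux_contDiffOn {n : ℕ} {V : Set (Fin n → ℂ)} (hV : IsOpen V) (m : ℕ) :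
    ∀ {f : (Fin n → ℂ) → ℂ}, DifferentiableOn ℂ f V → ContDiffOn ℂ m f V := by
  induction m with
  | zero => intro f hf; exact contDiffOn_zero.2 hf.continuousOn
  | succ m ih =>
    intro f hf
    push_cast
    rw [contDiffOn_succ_iff_fderiv_of_isOpen hV]
    refine ⟨hf, by simp, ?_⟩
    rw [contDiffOn_clm_apply]
    exact fun v => ih (aux_dir_deriv hV hf v)

/-- A local consequence of the constant rank theorem. -/
theorem aux_const_rank {E G : Type*} [NormedAddCommGroup E] [NormedSpace ℝ E]
    [FiniteDimensional ℝ E] [NormedAddCommGroup G] [NormedSpace ℝ G] [FiniteDimensional ℝ G]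
    {V : Set E} (hV : IsOpen V) {a : E → G} {r : ℕ} (ha : ContDiffOn ℝ 1 a V)
    (hrank : ∀ b ∈ V, Module.finrank ℝ (LinearMap.range (fderiv ℝ a b).toLinearMap) = r)
    {p : E} (hp : p ∈ V) :
    ∀ᶠ q in 𝓝 p, a q = a p → ∃ γ : ℝ → E, γ 0 = p ∧ γ 1 = q ∧ ∀ t ∈ Icc (0 : ℝ) 1,
      γ t ∈ V ∧ DifferentiableAt ℝ γ t ∧ fderiv ℝ a (γ t) (deriv γ t) = 0 ∧
      LinearMap.range (fderiv ℝ a (γ t)).toLinearMap =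
        LinearMap.range (fderiv ℝ a p).toLinearMap := by
  have : CompleteSpace E := FiniteDimensional.complete ℝ E
  have hda : ∀ b ∈ V, HasFDerivAt a (fderiv ℝ a b) b := fun b hb =>
    ((ha.differentiableOn one_ne_zero b hb).differentiableAt (hV.mem_nhds hb)).hasFDerivAt
  set U := LinearMap.range (fderiv ℝ a p).toLinearMap with hU
  set K := LinearMap.ker (fderiv ℝ a p).toLinearMap with hK
  obtain ⟨φ₀, hφ₀⟩ := U.subtype.exists_leftInverse_of_injective (Submodule.ker_subtype U)
  obtain ⟨π₀, hπ₀⟩ := K.subtype.exists_leftInverse_of_injective (Submodule.ker_subtype K)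
  let φ : G →L[ℝ] U := LinearMap.toContinuousLinearMap φ₀
  let π : E →L[ℝ] K := LinearMap.toContinuousLinearMap π₀
  have hφ : ∀ u : U, φ u = u := fun u => LinearMap.congr_fun hφ₀ u
  have hπ : ∀ u : K, π u = u := fun u => LinearMap.congr_fun hπ₀ u
  let Φ : E → U × K := fun x => (φ (a x), π x)
  let D : E →L[ℝ] U × K := (φ.comp (fderiv ℝ a p)).prod π
  have hDinj : Function.Injective D := by
    rw [injective_iff_map_eq_zero]
    intro x hx
    have h1 : φ (fderiv ℝ a p x) = 0 := congrArg Prod.fst hx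
    have h2 : π x = 0 := congrArg Prod.snd hx
    have h3 : fderiv ℝ a p x = 0 := by
      have := hφ ⟨fderiv ℝ a p x, ⟨x, rfl⟩⟩
      rw [h1] at this
      exact (congrArg Subtype.val this).symm
    have := hπ ⟨x, h3⟩
    rw [h2] at this
    exact (congrArg Subtype.val this).symm
  have hdim : Module.finrank ℝ E = Module.finrank ℝ (U × K) := by
    rw [Module.finrank_prod]
    exact (LinearMap.finrank_range_add_finrank_ker (fderiv ℝ a p).toLinearMap).symm
  let e : E ≃L[ℝ] U × K :=
    (LinearEquiv.ofInjectiveOfFinrankEq D.toLinearMap hDinj hdim).toContinuousLinearEquiv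
  have heD : (e : E →L[ℝ] U × K) = D := by ext x <;> rfl
  have hΦc : ContDiffAt ℝ 1 Φ p :=
    (φ.contDiff.contDiffAt.comp p (ha.contDiffAt (hV.mem_nhds hp))).prodMk π.contDiff.contDiffAt
  have hΦd : HasFDerivAt Φ (e : E →L[ℝ] U × K) p := by
    rw [heD]
    exact (φ.hasFDerivAt.comp p (hda p hp)).prodMk π.hasFDerivAt
  let H := hΦc.toOpenPartialHomeomorph Φ hΦd one_ne_zero
  let Ψ : U × K → E := H.symm
  have hHp : p ∈ H.source := hΦc.mem_toOpenPartialHomeomorph_source hΦd one_ne_zero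
  have hHt : Φ p ∈ H.target := hΦc.image_mem_toOpenPartialHomeomorph_target hΦd one_ne_zero
  have hΨc : ContDiffAt ℝ 1 Ψ (Φ p) := hΦc.to_localInverse hΦd one_ne_zero
  have hΨp : Ψ (Φ p) = p := H.left_inv hHp
  have hev : ∀ᶠ w in 𝓝 (Φ p), Φ (Ψ w) = w ∧ Ψ w ∈ V ∧ DifferentiableAt ℝ Ψ w := by
    have h1 : ∀ᶠ w in 𝓝 (Φ p), w ∈ H.target := H.open_target.mem_nhds hHt
    have h2 : ∀ᶠ w in 𝓝 (Φ p), Ψ w ∈ V :=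
      hΨc.continuousAt.eventually_mem (by rw [hΨp]; exact hV.mem_nhds hp)
    have h3 := hΨc.eventually (by simp)
    filter_upwards [h1, h2, h3] with w hw1 hw2 hw3
    exact ⟨H.right_inv hw1, hw2, hw3.differentiableAt one_ne_zero⟩
  obtain ⟨ε, hε, hT⟩ := Metric.eventually_nhds_iff_ball.1 hev
  let A : U × K → G := fun w => a (Ψ w)
  have hφA : ∀ w ∈ ball (Φ p) ε, φ (A w) = w.1 := fun w hw => congrArg Prod.fst (hT w hw).1
  have hAd : ∀ w ∈ ball (Φ p) ε,
      HasFDerivAt A ((fderiv ℝ a (Ψ w)).comp (fderiv ℝ Ψ w)) w := fun w hw =>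
    (hda _ (hT w hw).2.1).comp w (hT w hw).2.2.hasFDerivAt
  have hφd : ∀ w ∈ ball (Φ p) ε, ∀ x, φ (fderiv ℝ a (Ψ w) (fderiv ℝ Ψ w x)) = x.1 := by
    intro w hw x
    have h1 : HasFDerivAt (fun w => φ (A w)) _ w := φ.hasFDerivAt.comp w (hAd w hw)
    have h2 : HasFDerivAt (fun w : U × K => w.1) (ContinuousLinearMap.fst ℝ U K) w :=
      hasFDerivAt_fst
    have h3 := h2.congr_of_eventuallyEq (f₁ := fun w => φ (A w)) (by
      filter_upwards [isOpen_ball.mem_nhds hw] with w' hw' using hφA w' hw')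
    exact congrArg (fun L => L x) (h1.unique h3)
  have hUr : Module.finrank ℝ U = r := hrank p hp
  have hinj : ∀ w ∈ ball (Φ p) ε, ∀ x, φ (fderiv ℝ a (Ψ w) x) = 0 → fderiv ℝ a (Ψ w) x = 0 := by
    intro w hw x hx
    let L : LinearMap.range (fderiv ℝ a (Ψ w)).toLinearMap →ₗ[ℝ] U :=
      φ.toLinearMap.comp (Submodule.subtype _)
    have hsurj : Function.Surjective L := fun u =>
      ⟨⟨fderiv ℝ a (Ψ w) (fderiv ℝ Ψ w (u, 0)), ⟨_, rfl⟩⟩, hφd w hw (u, 0)⟩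
    have hLinj : Function.Injective L :=
      (LinearMap.injective_iff_surjective_of_finrank_eq_finrank
        ((hrank _ (hT w hw).2.1).trans hUr.symm)).2 hsurj
    have : (⟨fderiv ℝ a (Ψ w) x, ⟨x, rfl⟩⟩ :
      LinearMap.range (fderiv ℝ a (Ψ w)).toLinearMap) = 0 :=
      (injective_iff_map_eq_zero L).1 hLinj _ hx
    exact congrArg Subtype.val this
  have hz : ∀ w ∈ ball (Φ p) ε, ∀ z : K, fderiv ℝ a (Ψ w) (fderiv ℝ Ψ w (0, z)) = 0 :=
    fun w hw z => hinj w hw _ (hφd w hw (0, z))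
  have hA : ∀ y z z', (y, z) ∈ ball (Φ p) ε → (y, z') ∈ ball (Φ p) ε → A (y, z) = A (y, z') := by
    intro y z z' h h'
    let S : Set K := {z | (y, z) ∈ ball (Φ p) ε}
    have hSo : IsOpen S := isOpen_ball.preimage (by fun_prop)
    have hSc : Convex ℝ S := by
      intro z₁ h₁ z₂ h₂ s t hs ht hst
      have := convex_ball (Φ p) ε h₁ h₂ hs ht hst
      simp only [Prod.smul_mk, Prod.mk_add_mk, ← add_smul, hst, one_smul] at this
      exact this
    have hd : ∀ z ∈ S, HasFDerivAt (fun z => A (y, z)) (0 : K →L[ℝ] G) z := by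
      intro z hz'
      have h1 : HasFDerivAt (fun z : K => A (y, z)) _ z :=
        HasFDerivAt.comp (g := A) (f := fun z : K => (y, z)) z (hAd (y, z) hz') (hasFDerivAt_prodMk_right (𝕜 := ℝ) y z)
      refine h1.congr_fderiv (ContinuousLinearMap.ext fun x => ?_)
      exact hz (y, z) hz' x
    exact hSc.is_const_of_fderivWithin_eq_zero (𝕜 := ℝ) (f := fun z => A (y, z))
      (fun z hz' => (hd z hz').differentiableAt.differentiableWithinAt)
      (fun z hz' => by
        rw [fderivWithin_of_isOpen hSo hz', (hd z hz').fderiv]) h h'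
  have hrange : ∀ z, ((Φ p).1, z) ∈ ball (Φ p) ε →
      LinearMap.range (fderiv ℝ a (Ψ ((Φ p).1, z))).toLinearMap = U := by
    intro z hzm
    have hpm : ((Φ p).1, (Φ p).2) ∈ ball (Φ p) ε := mem_ball_self hε
    have h1 : HasFDerivAt (fun y : U => A (y, z)) _ (Φ p).1 :=
      HasFDerivAt.comp (g := A) (f := fun y : U => (y, z)) (Φ p).1 (hAd _ hzm) (hasFDerivAt_prodMk_left (Φ p).1 z)
    have h2 : HasFDerivAt (fun y : U => A (y, (Φ p).2)) _ (Φ p).1 :=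
      HasFDerivAt.comp (g := A) (f := fun y : U => (y, (Φ p).2)) (Φ p).1 (hAd _ hpm) (hasFDerivAt_prodMk_left (Φ p).1 (Φ p).2)
    have hee : (fun y : U => A (y, z)) =ᶠ[𝓝 (Φ p).1] (fun y : U => A (y, (Φ p).2)) := by
      have c1 : ContinuousAt (fun y : U => (y, z)) (Φ p).1 := by fun_prop
      have c2 : ContinuousAt (fun y : U => (y, (Φ p).2)) (Φ p).1 := by fun_prop
      filter_upwards [c1.eventually_mem (isOpen_ball.mem_nhds hzm),
        c2.eventually_mem (isOpen_ball.mem_nhds hpm)] with y hy1 hy2 using hA _ _ _ hy1 hy2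
    have h3 := h1.unique (h2.congr_of_eventuallyEq hee)
    symm
    refine Submodule.eq_of_le_of_finrank_eq ?_ (hUr.trans (hrank _ (hT _ hzm).2.1).symm)
    intro u hu
    have h4 := congrArg (fun L => L ⟨u, hu⟩) h3
    have hfin : fderiv ℝ a (Ψ ((Φ p).1, (Φ p).2)) (fderiv ℝ Ψ ((Φ p).1, (Φ p).2) (⟨u, hu⟩, 0))
        = u := by
      have h5 := hφd _ hpm (⟨u, hu⟩, 0)
      have h6 : Ψ ((Φ p).1, (Φ p).2) = p := hΨp
      rw [h6] at h5 ⊢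
      have h7 := hφ ⟨_, ⟨fderiv ℝ Ψ ((Φ p).1, (Φ p).2) (⟨u, hu⟩, 0), rfl⟩⟩
      exact congrArg Subtype.val (h7.symm.trans h5)
    refine ⟨fderiv ℝ Ψ ((Φ p).1, z) (⟨u, hu⟩, 0), ?_⟩
    exact h4.trans hfin
  have e1 : ∀ᶠ q in 𝓝 p, q ∈ H.source := H.open_source.mem_nhds hHp
  have e2 : ∀ᶠ q in 𝓝 p, Φ q ∈ ball (Φ p) ε :=
    hΦc.continuousAt.eventually_mem (ball_mem_nhds _ hε)
  filter_upwards [e1, e2] with q hq1 hq2 haq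
  have hfst : (Φ q).1 = (Φ p).1 := congrArg φ haq
  have hqeq : Φ q = ((Φ p).1, (Φ q).2) := Prod.ext hfst rfl
  let z : ℝ → K := fun t => (Φ p).2 + t • ((Φ q).2 - (Φ p).2)
  have hzm : ∀ t ∈ Icc (0 : ℝ) 1, ((Φ p).1, z t) ∈ ball (Φ p) ε := by
    intro t ht
    have := (convex_ball (Φ p) ε).add_smul_sub_mem (mem_ball_self hε) hq2 ht
    convert this using 1
    refine Prod.ext ?_ ?_
    · simp [hfst]
    · simp [z]
  refine ⟨fun t => Ψ ((Φ p).1, z t), ?_, ?_, fun t ht => ?_⟩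
  · simp only [z, zero_smul, add_zero]
    exact hΨp
  · simp only [z, one_smul, add_sub_cancel]
    rw [← hqeq]
    exact H.left_inv hq1
  · have hw := hzm t ht
    have hzd : HasDerivAt (fun t => ((Φ p).1, z t)) ((0 : U), (Φ q).2 - (Φ p).2) t := by
      refine (hasDerivAt_const t _).prodMk ?_
      have h8 := ((hasDerivAt_id t).smul_const ((Φ q).2 - (Φ p).2)).const_add (Φ p).2
      rw [one_smul] at h8
      exact h8
    have hγ : HasDerivAt (fun t => Ψ ((Φ p).1, z t)) _ t :=
      (hT _ hw).2.2.hasFDerivAt.comp_hasDerivAt t hzd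
    refine ⟨(hT _ hw).2.1, hγ.differentiableAt, ?_, hrange _ hw⟩
    rw [hγ.deriv]
    exact hz _ hw _

theorem aux_fderiv_contDiffOn {n : ℕ} {V : Set (Fin n → ℂ)} (hV : IsOpen V)
    {f : (Fin n → ℂ) → ℂ} (hf : DifferentiableOn ℂ f V) :
    ContDiffOn ℂ 1 (fderiv ℂ f) V := by
  have h := aux_contDiffOn hV 2 hf
  have h' : ContDiffOn ℂ (1 + 1) f V := by
    convert h using 1
    norm_num
  exact ((contDiffOn_succ_iff_fderiv_of_isOpen hV).1 h').2.2

theorem aux_a_contDiffOn {n m : ℕ} {V : Set (Fin n → ℂ)} (hV : IsOpen V)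
    (f : (Fin n → ℂ) → ℂ) (fi : Fin m → (Fin n → ℂ) → ℂ)
    (hf : DifferentiableOn ℂ f V) (hfi : ∀ i, DifferentiableOn ℂ (fi i) V)
    (hindep : ∀ b ∈ V,
      LinearIndependent ℝ (fun i : Fin m => (fderiv ℂ (fi i) b).restrictScalars ℝ))
    (a : (Fin n → ℂ) → Fin m → ℝ)
    (ha : ∀ b ∈ V, fderiv ℂ f b = ∑ i, ((a b i : ℂ) • fderiv ℂ (fi i) b)) :
    ContDiffOn ℝ 1 a V := by
  intro b₀ hb₀
  apply ContDiffAt.contDiffWithinAt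
  have : FiniteDimensional ℝ ((Fin n → ℂ) →L[ℂ] ℂ) := FiniteDimensional.trans ℝ ℂ _
  let L : (Fin n → ℂ) → ((Fin m → ℝ) →L[ℝ] ((Fin n → ℂ) →L[ℂ] ℂ)) := fun b =>
    ∑ i, (ContinuousLinearMap.proj (R := ℝ) (φ := fun _ : Fin m => ℝ) i).smulRight
      (fderiv ℂ (fi i) b)
  have hLapp : ∀ b x, L b x = ∑ i, x i • fderiv ℂ (fi i) b := by
    intro b x
    simp [L]
  have hd : ∀ g : (Fin n → ℂ) → ℂ, DifferentiableOn ℂ g V → ContDiffAt ℝ 1 (fderiv ℂ g) b₀ :=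
    fun g hg => ((aux_fderiv_contDiffOn hV hg).contDiffAt (hV.mem_nhds hb₀)).restrict_scalars ℝ
  have hLc : ContDiffAt ℝ 1 L b₀ := by
    refine ContDiffAt.sum fun i _ => ?_
    exact contDiffAt_const.smulRight (hd _ (hfi i))
  have hLinj : LinearMap.ker (L b₀).toLinearMap = ⊥ := by
    rw [LinearMap.ker_eq_bot']
    intro x hx
    have hx' : ∑ i, x i • fderiv ℂ (fi i) b₀ = 0 := by rw [← hLapp]; exact hx
    have := Fintype.linearIndependent_iff.1 (hindep b₀ hb₀) x (by
      ext y
      have h2 := congrArg (fun l => l y) hx'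
      simpa [sum_apply] using h2)
    exact funext this
  obtain ⟨M₀, hM₀⟩ := (L b₀).toLinearMap.exists_leftInverse_of_injective hLinj
  let M : ((Fin n → ℂ) →L[ℂ] ℂ) →L[ℝ] (Fin m → ℝ) := LinearMap.toContinuousLinearMap M₀
  let T : (Fin n → ℂ) → ((Fin m → ℝ) →L[ℝ] (Fin m → ℝ)) := fun b => M.comp (L b)
  have hT₀ : T b₀ = 1 := by
    ext1 x
    exact LinearMap.congr_fun hM₀ x
  have hTc : ContDiffAt ℝ 1 T b₀ := contDiffAt_const.clm_comp hLc
  have hinv : ContDiffAt ℝ 1 (fun b => Ring.inverse (T b)) b₀ := by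
    have h1 := contDiffAt_ringInverse (n := 1) ℝ (1 : ((Fin m → ℝ) →L[ℝ] (Fin m → ℝ))ˣ)
    refine ContDiffAt.comp (g := Ring.inverse) b₀ ?_ hTc
    rw [hT₀]
    exact h1
  have hunit : ∀ᶠ b in 𝓝 b₀, IsUnit (T b) :=
    hTc.continuousAt.eventually_mem (Units.isOpen.mem_nhds (by rw [hT₀]; exact isUnit_one))
  have hfin : ContDiffAt ℝ 1 (fun b => Ring.inverse (T b) (M (fderiv ℂ f b))) b₀ :=
    hinv.clm_apply (M.contDiff.contDiffAt.comp b₀ (hd f hf))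
  refine hfin.congr_of_eventuallyEq ?_
  filter_upwards [hunit, hV.mem_nhds hb₀] with b hb hbV
  have h1 : M (fderiv ℂ f b) = T b (a b) := by
    have h2 : fderiv ℂ f b = L b (a b) := by
      rw [ha b hbV, hLapp]
      refine Finset.sum_congr rfl fun i _ => ?_
      ext y
      simp
    rw [h2]
    rfl
  rw [h1, ← mul_apply_eq_comp, Ring.inverse_mul_cancel _ hb]
  rfl

theorem aux_symm {n m : ℕ} {V : Set (Fin n → ℂ)} (hV : IsOpen V)
    (f : (Fin n → ℂ) → ℂ) (fi : Fin m → (Fin n → ℂ) → ℂ)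
    (hf : DifferentiableOn ℂ f V) (hfi : ∀ i, DifferentiableOn ℂ (fi i) V)
    (a : (Fin n → ℂ) → Fin m → ℝ) (hac : ContDiffOn ℝ 1 a V)
    (ha : ∀ b ∈ V, fderiv ℂ f b = ∑ i, ((a b i : ℂ) • fderiv ℂ (fi i) b))
    {b : Fin n → ℂ} (hb : b ∈ V) (v w : Fin n → ℂ) :
    ∑ i, (fderiv ℝ a b v i : ℂ) * fderiv ℂ (fi i) b w =
      ∑ i, (fderiv ℝ a b w i : ℂ) * fderiv ℂ (fi i) b v := by
  have hda : HasFDerivAt a (fderiv ℝ a b) b :=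
    ((hac.differentiableOn one_ne_zero b hb).differentiableAt (hV.mem_nhds hb)).hasFDerivAt
  have hd : ∀ g : (Fin n → ℂ) → ℂ, DifferentiableOn ℂ g V →
      HasFDerivAt (fderiv ℂ g) ((fderiv ℂ (fderiv ℂ g) b).restrictScalars ℝ) b := fun g hg =>
    (((aux_fderiv_contDiffOn hV hg).contDiffAt (hV.mem_nhds hb)).differentiableAt
      one_ne_zero).hasFDerivAt.restrictScalars ℝ
  have hs : ∀ g : (Fin n → ℂ) → ℂ, DifferentiableOn ℂ g V →
      fderiv ℂ (fderiv ℂ g) b v w = fderiv ℂ (fderiv ℂ g) b w v := fun g hg =>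
    ((aux_contDiffOn hV 2 hg).contDiffAt (hV.mem_nhds hb)).isSymmSndFDerivAt (by simp) v w
  have hai : ∀ i, HasFDerivAt (fun x => a x i)
      ((ContinuousLinearMap.proj (R := ℝ) (φ := fun _ : Fin m => ℝ) i).comp (fderiv ℝ a b)) b :=
    fun i => hasFDerivAt_pi'.1 hda i
  have h1 := HasFDerivAt.fun_sum (u := Finset.univ) fun i _ => (hai i).smul (hd _ (hfi i))
  have h2 := (hd f hf).congr_of_eventuallyEq (f₁ := fun x => ∑ i, a x i • fderiv ℂ (fi i) x) (by
    filter_upwards [hV.mem_nhds hb] with x hx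
    rw [ha x hx]
    refine Finset.sum_congr rfl fun i _ => ?_
    ext y
    simp)
  have h3 := h1.unique h2
  have e : ∀ v w : Fin n → ℂ, fderiv ℂ (fderiv ℂ f) b v w =
      ∑ i, ((a b i : ℂ) * fderiv ℂ (fderiv ℂ (fi i)) b v w) +
      ∑ i, (fderiv ℝ a b v i : ℂ) * fderiv ℂ (fi i) b w := by
    intro v w
    have h4 := congrArg (fun l => l v w) h3
    simp only [sum_apply] at h4
    rw [← Finset.sum_add_distrib]
    refine Eq.trans h4.symm ?_
    refine Finset.sum_congr rfl fun i _ => ?_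
    simp
  have e1 := e v w
  rw [hs f hf, e w v] at e1
  have e2 : ∑ i, ((a b i : ℂ) * fderiv ℂ (fderiv ℂ (fi i)) b v w) =
      ∑ i, ((a b i : ℂ) * fderiv ℂ (fderiv ℂ (fi i)) b w v) :=
    Finset.sum_congr rfl fun i _ => by rw [hs _ (hfi i)]
  rw [e2] at e1
  exact (add_left_cancel e1).symm

theorem stmt_12 {n r : ℕ} {V : Set (Fin n → ℂ)} (hV : IsOpen V)
    (f : (Fin n → ℂ) → ℂ) (fi : Fin (2 * n) → (Fin n → ℂ) → ℂ)
    (hf : DifferentiableOn ℂ f V) (hfi : ∀ i, DifferentiableOn ℂ (fi i) V)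
    (hindep : ∀ b ∈ V,
      LinearIndependent ℝ (fun i : Fin (2 * n) => (fderiv ℂ (fi i) b).restrictScalars ℝ))
    (a : (Fin n → ℂ) → Fin (2 * n) → ℝ)
    (ha : ∀ b ∈ V, fderiv ℂ f b = ∑ i, ((a b i : ℂ) • fderiv ℂ (fi i) b))
    (hrank : ∀ b ∈ V, Module.finrank ℝ (LinearMap.range (fderiv ℝ a b).toLinearMap) = r) :
    ∀ c : Fin (2 * n) → ℝ, ∀ p ∈ V, a p = c →
      ∃ u : Fin r → (Fin (2 * n) → ℝ), LinearIndependent ℝ u ∧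
        ∀ j : Fin r, ∃ c₀ : ℂ,
          ∀ q ∈ connectedComponentIn {x | x ∈ V ∧ a x = c} p,
            ∑ i, (u j i : ℂ) * fi i q = c₀ := by
  intro c p hp hpc
  have hac := aux_a_contDiffOn hV f fi hf hfi hindep a ha
  set S : Set (Fin n → ℂ) := {x | x ∈ V ∧ a x = c} with hS
  set F := connectedComponentIn S p with hF
  have hFS : F ⊆ S := connectedComponentIn_subset S p
  have hpF : p ∈ F := mem_connectedComponentIn ⟨hp, hpc⟩
  let Rg : (Fin n → ℂ) → Submodule ℝ (Fin (2 * n) → ℝ) := fun x =>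
    LinearMap.range (fderiv ℝ a x).toLinearMap
  let P : (Fin n → ℂ) → (Fin n → ℂ) → Prop := fun x y => Rg x = Rg y ∧
    ∀ u ∈ Rg x, ∑ i, (u i : ℂ) * fi i x = ∑ i, (u i : ℂ) * fi i y
  have hPsymm : ∀ x y, P x y → P y x := fun x y h =>
    ⟨h.1.symm, fun u hu => (h.2 u (by rw [h.1]; exact hu)).symm⟩
  have hloc : ∀ x ∈ F, ∀ᶠ y in 𝓝[F] x, P x y ∧ P y x := by
    intro x hx
    have h1 := (aux_const_rank hV hac hrank (hFS hx).1).filter_mono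
      (nhdsWithin_le_nhds (s := F))
    filter_upwards [h1, self_mem_nhdsWithin] with y hy hyF
    obtain ⟨γ, h0, hγ1, hγ⟩ := hy ((hFS hyF).2.trans (hFS hx).2.symm)
    have hP : P x y := by
      refine ⟨?_, fun u hu => ?_⟩
      · have := (hγ 1 (by simp)).2.2.2
        rw [hγ1] at this
        exact this.symm
      have hderiv : ∀ t ∈ Icc (0 : ℝ) 1,
          HasDerivAt (fun t => ∑ i, (u i : ℂ) * fi i (γ t)) 0 t := by
        intro t ht
        obtain ⟨htV, htd, ht0, htr⟩ := hγ t ht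
        have h2 : HasDerivAt (fun t => ∑ i, (u i : ℂ) * fi i (γ t))
            (∑ i, (u i : ℂ) * fderiv ℂ (fi i) (γ t) (deriv γ t)) t := by
          refine HasDerivAt.fun_sum fun i _ => ?_
          refine HasDerivAt.const_mul _ ?_
          have h3 := (((hfi i) _ htV).differentiableAt
            (hV.mem_nhds htV)).hasFDerivAt.restrictScalars ℝ
          exact h3.comp_hasDerivAt t htd.hasDerivAt
        have hu' : u ∈ LinearMap.range (fderiv ℝ a (γ t)).toLinearMap := by
          rw [htr]; exact hu
        obtain ⟨v, rfl⟩ := hu'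
        convert h2 using 1
        have h4 := aux_symm hV f fi hf hfi a hac ha htV v (deriv γ t)
        refine Eq.symm (h4.trans ?_)
        rw [ht0]
        simp
      have h5 := (convex_Icc (0 : ℝ) 1).is_const_of_fderivWithin_eq_zero (𝕜 := ℝ)
        (f := fun t => ∑ i, (u i : ℂ) * fi i (γ t))
        (fun t ht => (hderiv t ht).differentiableAt.differentiableWithinAt)
        (fun t ht => by
          have h6 := (hderiv t ht).hasFDerivAt.hasFDerivWithinAt (s := Icc (0 : ℝ) 1)
          rw [h6.fderivWithin (uniqueDiffOn_Icc zero_lt_one t ht)]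
          ext; simp)
        (x := 0) (y := 1) (by simp) (by simp)
      simpa only [h0, hγ1] using h5
    exact ⟨hP, hPsymm _ _ hP⟩
  have hall : ∀ q ∈ F, P p q := fun q hq =>
    isPreconnected_connectedComponentIn.induction₂' P hloc
      (fun x y z _ _ _ hxy hyz => ⟨hxy.1.trans hyz.1, fun u hu =>
        (hxy.2 u hu).trans (hyz.2 u (by rw [← hxy.1]; exact hu))⟩) hpF hq
  let B := Module.finBasisOfFinrankEq ℝ (Rg p) (hrank p hp)
  refine ⟨fun j => (B j : Fin (2 * n) → ℝ), ?_, fun j => ⟨∑ i, ((B j : Fin (2 * n) → ℝ) i : ℂ) *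
    fi i p, fun q hq => ((hall q hq).2 _ (B j).2).symm⟩⟩
  exact B.linearIndependent.map' (Rg p).subtype (Submodule.ker_subtype _)
end
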